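/- arXiv:2411.13166 — 8 statements merged into one kernel-verified Lean document; each statement's English description precedes it below -/
import Mathlib

section
/- For all natural numbers n and m, the shifted Legendre polynomials satisfy the orthogonality relation ∫₀¹ P_n(2x−1) P_m(2x−1) dx = δ_{n,m}/(2n+1), where δ_{n,m} is the Kronecker delta. -/
open MeasureTheory

/-- The Legendre polynomial `P n`, defined by Rodrigues' formula
`P_n(x) = (1/(2^n n!)) (d/dx)^n ((x² − 1)^n)`. -/
noncomputable def legendre (n : ℕ) (x : ℝ) : ℝ :=
  (1 / ((2 : ℝ) ^ n * n.factorial)) * iteratedDeriv n (fun y : ℝ => (y ^ 2 - 1) ^ n) x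

/-!
On any interval `[a, b]`, the `n`-th derivative `R_n` of `((x - a)(x - b))^n` can be paired with a
polynomial `q` by integrating by parts `n` times: the boundary terms vanish because `a` and `b` are
roots of order `n`. If `deg q ≤ n`, then `q^(n)` is the constant `n! * coeff q n`, so only Euler's
beta integral `∫ (x - a)^n (b - x)^n` remains. Taking `q = R_m` with `m ≤ n` gives orthogonality for
`m < n` (the coefficient is zero) and the norm of `R_n` for `m = n`.
-/

section Rodrigues

open Polynomial
open scoped Nat

theorem succ_mul_integral_sub_pow_mul_sub_pow_succ (a b : ℝ) (m n : ℕ) :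
    (m + 1) * ∫ x in a..b, (x - a) ^ m * (b - x) ^ (n + 1) =
      (n + 1) * ∫ x in a..b, (x - a) ^ (m + 1) * (b - x) ^ n := by
  have hderiv (x : ℝ) : HasDerivAt (fun x => (x - a) ^ (m + 1) * (b - x) ^ (n + 1))
      ((m + 1) * ((x - a) ^ m * (b - x) ^ (n + 1)) -
        (n + 1) * ((x - a) ^ (m + 1) * (b - x) ^ n)) x := by
    refine ((((hasDerivAt_id' x).sub_const a).fun_pow (m + 1)).fun_mul
      (((hasDerivAt_id' x).const_sub b).fun_pow (n + 1))).congr_deriv ?_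
    push_cast
    ring
  have hftc := intervalIntegral.integral_eq_sub_of_hasDerivAt (a := a) (b := b)
    (fun x _ => hderiv x) (Continuous.intervalIntegrable (by fun_prop) _ _)
  rw [intervalIntegral.integral_sub (Continuous.intervalIntegrable (by fun_prop) _ _)
    (Continuous.intervalIntegrable (by fun_prop) _ _), intervalIntegral.integral_const_mul,
    intervalIntegral.integral_const_mul] at hftc
  simpa [sub_eq_zero] using hftc

theorem integral_sub_pow_mul_sub_pow (a b : ℝ) (m n : ℕ) :
    ∫ x in a..b, (x - a) ^ m * (b - x) ^ n =
      m ! * n ! / (m + n + 1)! * (b - a) ^ (m + n + 1) := by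
  induction n generalizing m with
  | zero =>
    have hpow : ∫ x in a..b, (x - a) ^ m = (b - a) ^ (m + 1) / (m + 1) := by
      simp [intervalIntegral.integral_comp_sub_right (fun x => x ^ m)]
    simp only [pow_zero, mul_one, add_zero, hpow, Nat.factorial_zero, Nat.factorial_succ m]
    push_cast
    field_simp
  | succ n ih =>
    apply mul_left_cancel₀ (Nat.cast_add_one_ne_zero (R := ℝ) m)
    rw [succ_mul_integral_sub_pow_mul_sub_pow_succ, ih, show m + 1 + n = m + (n + 1) by ring,
      Nat.factorial_succ m, Nat.factorial_succ n]
    push_cast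
    ring

theorem iteratedDeriv_polynomial_eval {𝕜 : Type*} [NontriviallyNormedField 𝕜] (p : 𝕜[X]) (n : ℕ) :
    iteratedDeriv n (fun x => p.eval x) = fun x => (derivative^[n] p).eval x := by
  have hsemiconj : Function.Semiconj (fun (p : 𝕜[X]) x => p.eval x) derivative deriv :=
    fun p => funext fun _ => p.deriv.symm
  rw [iteratedDeriv_eq_iterate]
  exact (hsemiconj.iterate_right n p).symm

theorem iterate_derivative_eq_C_of_natDegree_le {R : Type*} [Semiring R] {p : R[X]} {n : ℕ}
    (hp : p.natDegree ≤ n) : derivative^[n] p = C (n ! * p.coeff n) := by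
  have hconst : (derivative^[n] p).natDegree = 0 := by
    have := natDegree_iterate_derivative p n
    omega
  rw [eq_C_of_natDegree_eq_zero hconst, coeff_iterate_derivative, zero_add,
    Nat.descFactorial_self, nsmul_eq_mul]

theorem eval_iterate_derivative_eq_zero_of_pow_dvd {R : Type*} [CommRing R] {p : R[X]} {a : R}
    {k n : ℕ} (hp : (X - C a) ^ n ∣ p) (hk : k < n) : (derivative^[k] p).eval a = 0 :=
  dvd_iff_isRoot.mp <| (dvd_pow_self _ (Nat.sub_ne_zero_of_lt hk)).trans
    (pow_sub_dvd_iterate_derivative_of_pow_dvd k hp)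

theorem integral_derivative_mul_of_eval_eq_zero {a b : ℝ} {p : ℝ[X]} (ha : p.eval a = 0)
    (hb : p.eval b = 0) (q : ℝ[X]) :
    ∫ x in a..b, (derivative p).eval x * q.eval x =
      -∫ x in a..b, p.eval x * (derivative q).eval x := by
  rw [intervalIntegral.integral_mul_deriv_eq_deriv_mul
    (fun x _ => p.hasDerivAt x) (fun x _ => q.hasDerivAt x)
    ((derivative p).continuous.intervalIntegrable _ _)
    ((derivative q).continuous.intervalIntegrable _ _), ha, hb]
  ring

theorem integral_iterate_derivative_mul_of_pow_dvd {a b : ℝ} {p : ℝ[X]} {n : ℕ}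
    (ha : (X - C a) ^ n ∣ p) (hb : (X - C b) ^ n ∣ p) (q : ℝ[X]) :
    ∫ x in a..b, (derivative^[n] p).eval x * q.eval x =
      (-1) ^ n * ∫ x in a..b, p.eval x * (derivative^[n] q).eval x := by
  induction n generalizing q with
  | zero => simp
  | succ n ih =>
    rw [Function.iterate_succ_apply', integral_derivative_mul_of_eval_eq_zero
        (eval_iterate_derivative_eq_zero_of_pow_dvd ha n.lt_succ_self)
        (eval_iterate_derivative_eq_zero_of_pow_dvd hb n.lt_succ_self),
      ih ((pow_dvd_pow _ n.le_succ).trans ha) ((pow_dvd_pow _ n.le_succ).trans hb),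
      Function.iterate_succ_apply]
    ring

/-- The unnormalized orthogonal polynomials `(d/dx)^n ((x - a)(x - b))^n` on `[a, b]` given by
Rodrigues' formula. The Legendre polynomials are the case `a = -1`, `b = 1`, up to the
factor `1 / (2^n n!)`. -/
noncomputable def rodrigues {R : Type*} [CommRing R] (a b : R) (n : ℕ) : R[X] :=
  derivative^[n] (((X - C a) * (X - C b)) ^ n)

section Coefficients

variable {R : Type*} [CommRing R] (a b : R) (n : ℕ)

theorem natDegree_rodrigues_le : (rodrigues a b n).natDegree ≤ n := by
  have hpow : (((X - C a) * (X - C b)) ^ n).natDegree ≤ n * 2 := by compute_degree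
  have := natDegree_iterate_derivative (((X - C a) * (X - C b)) ^ n) n
  rw [rodrigues]
  omega

theorem coeff_rodrigues_self : (rodrigues a b n).coeff n = (2 * n).descFactorial n := by
  have hlead : (((X - C a) * (X - C b)) ^ n).coeff (n * 2) = 1 := by compute_degree!
  rw [rodrigues, coeff_iterate_derivative, ← two_mul, mul_comm 2 n, hlead, nsmul_one]

end Coefficients

theorem integral_rodrigues_mul_of_natDegree_le (a b : ℝ) {n : ℕ} {q : ℝ[X]}
    (hq : q.natDegree ≤ n) :
    ∫ x in a..b, (rodrigues a b n).eval x * q.eval x =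
      n ! ^ 3 / (2 * n + 1)! * (b - a) ^ (2 * n + 1) * q.coeff n := by
  have hbeta : (-1) ^ n * ∫ x in a..b, (((X - C a) * (X - C b)) ^ n).eval x =
      n ! ^ 2 / (2 * n + 1)! * (b - a) ^ (2 * n + 1) := by
    have heval (x : ℝ) : (-1) ^ n * (((X - C a) * (X - C b)) ^ n).eval x =
        (x - a) ^ n * (b - x) ^ n := by
      simp only [eval_pow, eval_mul, eval_sub, eval_X, eval_C, ← mul_pow]
      ring
    simp only [← intervalIntegral.integral_const_mul, heval, integral_sub_pow_mul_sub_pow,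
      ← two_mul, ← pow_two]
  rw [rodrigues, integral_iterate_derivative_mul_of_pow_dvd
      (pow_dvd_pow_of_dvd (dvd_mul_right _ _) n) (pow_dvd_pow_of_dvd (dvd_mul_left _ _) n),
    iterate_derivative_eq_C_of_natDegree_le hq]
  simp only [eval_C, intervalIntegral.integral_mul_const]
  rw [← mul_assoc, hbeta]
  ring

theorem integral_rodrigues_mul_rodrigues_of_lt (a b : ℝ) {m n : ℕ} (h : m < n) :
    ∫ x in a..b, (rodrigues a b n).eval x * (rodrigues a b m).eval x = 0 := by
  have hdeg := (natDegree_rodrigues_le a b m).trans_lt h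
  rw [integral_rodrigues_mul_of_natDegree_le a b hdeg.le, coeff_eq_zero_of_natDegree_lt hdeg,
    mul_zero]

theorem integral_rodrigues_mul_self (a b : ℝ) (n : ℕ) :
    ∫ x in a..b, (rodrigues a b n).eval x * (rodrigues a b n).eval x =
      n ! ^ 2 * (b - a) ^ (2 * n + 1) / (2 * n + 1) := by
  have hdesc : ((2 * n).descFactorial n : ℝ) = (2 * n)! / n ! := by
    have hmul : n ! * (2 * n).descFactorial n = (2 * n)! := by
      simpa [two_mul] using Nat.factorial_mul_descFactorial (Nat.le_add_right n n)
    rw [eq_div_iff (by positivity), mul_comm]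
    exact_mod_cast hmul
  rw [integral_rodrigues_mul_of_natDegree_le a b (natDegree_rodrigues_le a b n),
    coeff_rodrigues_self, hdesc, Nat.factorial_succ]
  push_cast
  field_simp

theorem legendre_eq_rodrigues (n : ℕ) (x : ℝ) :
    legendre n x = 1 / (2 ^ n * n !) * (rodrigues (-1) 1 n).eval x := by
  have heval (y : ℝ) : (y ^ 2 - 1) ^ n = (((X - C (-1)) * (X - C 1)) ^ n : ℝ[X]).eval y := by
    simp only [eval_pow, eval_mul, eval_sub, eval_X, eval_C]
    ring
  simp only [legendre, rodrigues, heval, iteratedDeriv_polynomial_eval]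

theorem integral_legendre_mul_legendre (n m : ℕ) :
    ∫ x in (-1 : ℝ)..1, legendre n x * legendre m x =
      if n = m then 2 / (2 * (n : ℝ) + 1) else 0 := by
  simp only [legendre_eq_rodrigues, mul_mul_mul_comm, intervalIntegral.integral_const_mul]
  split_ifs with h
  · rw [← h, integral_rodrigues_mul_self]
    field_simp
    ring
  · rcases lt_or_gt_of_ne h with hlt | hgt
    · simp only [mul_comm (eval _ (rodrigues _ _ n)),
        integral_rodrigues_mul_rodrigues_of_lt _ _ hlt, mul_zero]
    · rw [integral_rodrigues_mul_rodrigues_of_lt _ _ hgt, mul_zero]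

end Rodrigues

/-- Orthogonality of the shifted Legendre polynomials on `[0,1]`:
`∫₀¹ P_n(2x−1) P_m(2x−1) dx = δ_{n,m} / (2n+1)`. -/
theorem shifted_legendre_orthogonality (n m : ℕ) :
    (∫ x in (0 : ℝ)..1, legendre n (2 * x - 1) * legendre m (2 * x - 1))
      = if n = m then 1 / (2 * (n : ℝ) + 1) else 0 := by
  calc ∫ x in (0 : ℝ)..1, legendre n (2 * x - 1) * legendre m (2 * x - 1)
      = 2⁻¹ * ∫ x in (-1 : ℝ)..1, legendre n x * legendre m x := by
        rw [intervalIntegral.integral_comp_mul_sub (fun x => legendre n x * legendre m x)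
          two_ne_zero]
        norm_num
    _ = if n = m then 1 / (2 * (n : ℝ) + 1) else 0 := by
        rw [integral_legendre_mul_legendre, mul_ite, mul_zero]
        congr 1
        ring
end

section
/- For every natural number n and every x ∈ ℝ, (1/n!) (d/dx)^n ((x²−x)^n) = P_n(2x−1); that is, the Rodrigues-type formula (1/n!)(d/dx)^n (x²−x)^n produces exactly the shifted Legendre polynomial. -/
section AffineSubstitution

variable {𝕜 : Type*} [NontriviallyNormedField 𝕜]

theorem iteratedDeriv_comp_const_mul_sub_const {F : Type*} [NormedAddCommGroup F]
    [NormedSpace 𝕜 F] (n : ℕ) (f : 𝕜 → F) (a b x : 𝕜) :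
    iteratedDeriv n (fun y => f (a * y - b)) x = a ^ n • iteratedDeriv n f (a * x - b) := by
  induction n generalizing x with
  | zero => simp
  | succ n ih =>
    calc iteratedDeriv (n + 1) (fun y => f (a * y - b)) x
        = deriv (fun y => a ^ n • iteratedDeriv n f (a * y - b)) x := by
          rw [iteratedDeriv_succ, funext ih]
      _ = a ^ n • deriv (fun y => iteratedDeriv n f (a * y - b)) x :=
          deriv_fun_const_smul_field _ _
      _ = a ^ n • a • deriv (fun z => iteratedDeriv n f (z - b)) (a * x) := by
          rw [deriv_comp_mul_left a (fun z => iteratedDeriv n f (z - b)) x]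
      _ = a ^ (n + 1) • iteratedDeriv (n + 1) f (a * x - b) := by
          rw [deriv_comp_sub_const, ← iteratedDeriv_succ, smul_smul, ← pow_succ]

theorem four_pow_mul_iteratedDeriv_sq_sub_self_pow (k n : ℕ) (x : 𝕜) :
    4 ^ n * iteratedDeriv k (fun y : 𝕜 => (y ^ 2 - y) ^ n) x =
      2 ^ k * iteratedDeriv k (fun y : 𝕜 => (y ^ 2 - 1) ^ n) (2 * x - 1) := by
  have complete_square (y : 𝕜) : 4 ^ n * (y ^ 2 - y) ^ n = ((2 * y - 1) ^ 2 - 1) ^ n := by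
    rw [← mul_pow]
    ring
  calc 4 ^ n * iteratedDeriv k (fun y : 𝕜 => (y ^ 2 - y) ^ n) x
      = iteratedDeriv k (fun y : 𝕜 => 4 ^ n * (y ^ 2 - y) ^ n) x :=
        (iteratedDeriv_const_mul_field _ _).symm
    _ = iteratedDeriv k (fun y : 𝕜 => ((2 * y - 1) ^ 2 - 1) ^ n) x := by
        rw [funext complete_square]
    _ = 2 ^ k * iteratedDeriv k (fun y : 𝕜 => (y ^ 2 - 1) ^ n) (2 * x - 1) :=
        iteratedDeriv_comp_const_mul_sub_const k (fun z => (z ^ 2 - 1) ^ n) 2 1 x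

end AffineSubstitution

/-- The Rodrigues-type formula `(1/n!) (d/dx)^n ((x² − x)^n)` produces exactly the
shifted Legendre polynomial `P_n(2x − 1)`. -/
theorem shifted_legendre_rodrigues (n : ℕ) (x : ℝ) :
    (1 / (n.factorial : ℝ)) * iteratedDeriv n (fun y : ℝ => (y ^ 2 - y) ^ n) x
      = legendre n (2 * x - 1) := by
  have four_pow : (4 : ℝ) ^ n = 2 ^ n * 2 ^ n := by
    rw [← mul_pow]
    norm_num
  have rescale : 2 ^ n * iteratedDeriv n (fun y : ℝ => (y ^ 2 - y) ^ n) x =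
      iteratedDeriv n (fun y : ℝ => (y ^ 2 - 1) ^ n) (2 * x - 1) := by
    apply mul_left_cancel₀ (pow_ne_zero n (two_ne_zero' ℝ))
    rw [← mul_assoc, ← four_pow, four_pow_mul_iteratedDeriv_sq_sub_self_pow]
  rw [legendre, ← rescale]
  field_simp
end

section
/- For every natural number n, every cutoff frequency ω_c > 0 and every time t > 0, the flat-spectral-density chain coupling satisfies ∫₀^{ω_c} P_n(2ω/ω_c − 1) e^{−iωt} dω = ω_c e^{−i ω_c t / 2} (−i)^n j_n(ω_c t / 2), where P_n is the Legendre polynomial and j_n is the spherical Bessel function of the first kind. -/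
open MeasureTheory

/-- The spherical Bessel function of the first kind, defined by Rayleigh's formula
`j_n(θ) = (−θ)^n ((1/θ) d/dθ)^n (sin θ / θ)`. -/
noncomputable def sphericalBessel (n : ℕ) (θ : ℝ) : ℝ :=
  (-θ) ^ n * ((fun f : ℝ → ℝ => fun t : ℝ => deriv f t / t)^[n]
    (fun t : ℝ => Real.sin t / t)) θ

/-!
Integrating Rodrigues' formula by parts `n` times turns the Fourier transform of `P_n` on `[-1, 1]`
into that of `(1 - x²)^n`, up to the factor `(-iθ)^n / (2^n n!)`; evenness leaves only the cosine.
The operator `(1/θ) d/dθ` maps `∫ cos (θx) (1 - x²)^n dx` to a multiple of the same integral with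
`n + 1` in place of `n`, and the integral for `n = 0` is `2 sin θ / θ`, so Rayleigh's formula
becomes Poisson's integral `j_n(θ) = θ^n / (2^(n+1) n!) ∫ cos (θx) (1 - x²)^n dx`. An affine change
of variables carries `[-1, 1]` to `[0, ω_c]`.
-/

theorem iteratedDeriv_pow_eq_zero_of_lt {𝕜 : Type*} [NontriviallyNormedField 𝕜] [CharZero 𝕜]
    [CompleteSpace 𝕜] {f : 𝕜 → 𝕜} {z : 𝕜} (hf : AnalyticAt 𝕜 f z) (hz : f z = 0) {k n : ℕ}
    (hk : k < n) : iteratedDeriv k (fun y => f y ^ n) z = 0 := by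
  have horder : (n : ℕ∞) ≤ analyticOrderAt (fun y => f y ^ n) z := by
    change (n : ℕ∞) ≤ analyticOrderAt (f ^ n) z
    rw [analyticOrderAt_pow hf, nsmul_eq_mul]
    exact le_mul_of_one_le_right' (Order.one_le_iff_ne_zero.2 (hf.analyticOrderAt_ne_zero.2 hz))
  exact (natCast_le_analyticOrderAt_iff_iteratedDeriv_eq_zero (hf.fun_pow n)).1 horder k hk

theorem iteratedDeriv_cexp_const_mul_ofReal (n : ℕ) (c : ℂ) :
    iteratedDeriv n (fun x : ℝ => Complex.exp (c * x))
      = fun x : ℝ => c ^ n * Complex.exp (c * x) := by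
  induction n with
  | zero => simp
  | succ n ih =>
    have hexp (x : ℝ) : HasDerivAt (fun x : ℝ => Complex.exp (c * x))
        (Complex.exp (c * x) * c) x := by
      simpa using ((Complex.ofRealCLM.hasDerivAt (x := x)).const_mul c).cexp
    rw [iteratedDeriv_succ, ih]
    ext x
    rw [((hexp x).const_mul (c ^ n)).deriv]
    ring

theorem integral_iteratedDeriv_smul {𝕜 E : Type*} [NontriviallyNormedField 𝕜] [NormedAlgebra ℝ 𝕜]
    [NormedAddCommGroup E] [NormedSpace 𝕜 E] [NormedSpace ℝ E] [IsScalarTower ℝ 𝕜 E]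
    [CompleteSpace E] {u : ℝ → 𝕜} {v : ℝ → E} {a b : ℝ} {n : ℕ} (hu : ContDiff ℝ n u)
    (hv : ContDiff ℝ n v) (ha : ∀ k < n, iteratedDeriv k u a = 0)
    (hb : ∀ k < n, iteratedDeriv k u b = 0) :
    ∫ x in a..b, iteratedDeriv n u x • v x
      = (-1 : ℝ) ^ n • ∫ x in a..b, u x • iteratedDeriv n v x := by
  induction n generalizing v with
  | zero => simp
  | succ n ih =>
    have hdu (x : ℝ) : HasDerivAt (iteratedDeriv n u) (iteratedDeriv (n + 1) u x) x := by
      rw [iteratedDeriv_succ]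
      exact (hu.differentiable_iteratedDeriv n (by exact_mod_cast n.lt_succ_self) x).hasDerivAt
    have hdv (x : ℝ) : HasDerivAt v (deriv v x) x :=
      (hv.differentiable (by simp) x).hasDerivAt
    have hv' : ContDiff ℝ n (deriv v) := by
      rw [Nat.cast_add_one] at hv
      exact hv.deriv'
    have hparts := intervalIntegral.integral_smul_deriv_eq_deriv_smul (a := a) (b := b)
      (fun x _ => hdu x) (fun x _ => hdv x)
      ((hu.continuous_iteratedDeriv (n + 1) le_rfl).intervalIntegrable _ _)
      (hv'.continuous.intervalIntegrable _ _)
    rw [ha n n.lt_succ_self, hb n n.lt_succ_self, zero_smul, zero_smul, sub_zero, zero_sub,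
      ih (hu.of_le (by exact_mod_cast n.le_succ)) hv' (fun k hk => ha k (hk.trans n.lt_succ_self))
        (fun k hk => hb k (hk.trans n.lt_succ_self))] at hparts
    rw [← neg_eq_iff_eq_neg.2 hparts, iteratedDeriv_succ', pow_succ, mul_neg_one, neg_smul]

theorem integral_legendre_smul {E : Type*} [NormedAddCommGroup E] [NormedSpace ℝ E]
    [CompleteSpace E] {n : ℕ} {v : ℝ → E} (hv : ContDiff ℝ n v) :
    ∫ x in (-1 : ℝ)..1, legendre n x • v x
      = (1 / ((2 : ℝ) ^ n * n.factorial)) •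
          ∫ x in (-1 : ℝ)..1, (1 - x ^ 2) ^ n • iteratedDeriv n v x := by
  have hvanish {x : ℝ} (hx : x ^ 2 - 1 = 0) (k : ℕ) (hk : k < n) :
      iteratedDeriv k (fun y : ℝ => (y ^ 2 - 1) ^ n) x = 0 :=
    iteratedDeriv_pow_eq_zero_of_lt (f := fun y : ℝ => y ^ 2 - 1) (by fun_prop) hx hk
  have hsign (x : ℝ) : (1 - x ^ 2) ^ n = (-1) ^ n * (x ^ 2 - 1) ^ n := by
    rw [← mul_pow]
    ring
  simp only [legendre, hsign, mul_smul, intervalIntegral.integral_smul]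
  rw [integral_iteratedDeriv_smul (by fun_prop) hv (hvanish (by norm_num))
    (hvanish (by norm_num))]

theorem integral_cexp_neg_smul_eq_integral_cos_smul {E : Type*} [NormedAddCommGroup E]
    [NormedSpace ℂ E] {f : ℝ → E} {a : ℝ} (hf : f.Even)
    (hint : IntervalIntegrable f volume (-a) a) (θ : ℂ) :
    ∫ x in (-a)..a, Complex.exp (-(Complex.I * θ) * x) • f x
      = ∫ x in (-a)..a, Complex.cos (θ * x) • f x := by
  have hint_exp (c : ℂ) :
      IntervalIntegrable (fun x : ℝ => Complex.exp (c * x) • f x) volume (-a) a :=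
    hint.continuousOn_smul (by fun_prop)
  have hreflect : ∫ x in (-a)..a, Complex.exp (Complex.I * θ * x) • f x
      = ∫ x in (-a)..a, Complex.exp (-(Complex.I * θ) * x) • f x := by
    simpa [hf _] using intervalIntegral.integral_comp_neg (a := -a) (b := a)
      (fun x : ℝ => Complex.exp (-(Complex.I * θ) * x) • f x)
  have hcos (x : ℝ) : Complex.cos (θ * x) • f x = (1 / 2 : ℂ) •
      (Complex.exp (Complex.I * θ * x) • f x + Complex.exp (-(Complex.I * θ) * x) • f x) := by
    rw [Complex.cos, ← add_smul, smul_smul]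
    ring_nf
  simp only [hcos, intervalIntegral.integral_smul]
  rw [intervalIntegral.integral_add (hint_exp _) (hint_exp _), hreflect, ← two_smul ℂ, smul_smul]
  norm_num

theorem hasDerivAt_integral_cos_smul {E : Type*} [NormedAddCommGroup E] [NormedSpace ℝ E]
    {μ : Measure ℝ} {f : ℝ → E} {a b : ℝ} (hf : IntervalIntegrable f μ a b) (θ : ℝ) :
    HasDerivAt (fun θ => ∫ x in a..b, Real.cos (θ * x) • f x ∂μ)
      (∫ x in a..b, (-Real.sin (θ * x) * x) • f x ∂μ) θ := by
  have hsmul {g : ℝ → ℝ} (hg : Continuous g) : IntervalIntegrable (fun x => g x • f x) μ a b :=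
    hf.continuousOn_smul hg.continuousOn
  refine (intervalIntegral.hasDerivAt_integral_of_dominated_loc_of_deriv_le
    (F := fun θ x => Real.cos (θ * x) • f x)
    (F' := fun θ x => (-Real.sin (θ * x) * x) • f x)
    (bound := fun x => ‖x • f x‖) Filter.univ_mem
    (.of_forall fun _ => (hsmul (by fun_prop)).def'.aestronglyMeasurable)
    (hsmul (by fun_prop)) (hsmul (by fun_prop)).def'.aestronglyMeasurable
    (.of_forall fun x _ φ _ => ?_) (hsmul continuous_id).norm (.of_forall fun x _ φ _ => ?_)).2
  · rw [mul_smul, norm_smul, norm_neg]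
    exact mul_le_of_le_one_left (norm_nonneg _) (Real.abs_sin_le_one _)
  · simpa using (((hasDerivAt_id φ).mul_const x).cos).smul_const (f x)

/-- The integral `∫ cos (θx) (1 - x²)^n dx` over `[-1, 1]` in Poisson's representation of the
spherical Bessel function `j_n`, without the prefactor `θ^n / (2^(n+1) n!)`. -/
noncomputable def poissonCosIntegral (n : ℕ) (θ : ℝ) : ℝ :=
  ∫ x in (-1 : ℝ)..1, Real.cos (θ * x) * (1 - x ^ 2) ^ n

theorem poissonCosIntegral_zero {θ : ℝ} (hθ : θ ≠ 0) :
    poissonCosIntegral 0 θ = 2 * (Real.sin θ / θ) := by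
  simp only [poissonCosIntegral, pow_zero, mul_one, intervalIntegral.integral_comp_mul_left _ hθ,
    integral_cos, mul_neg, Real.sin_neg, smul_eq_mul]
  ring

theorem mul_poissonCosIntegral_succ (n : ℕ) (θ : ℝ) :
    θ * poissonCosIntegral (n + 1) θ
      = 2 * (n + 1) * ∫ x in (-1 : ℝ)..1, Real.sin (θ * x) * x * (1 - x ^ 2) ^ n := by
  have hsin (x : ℝ) : HasDerivAt (fun x => Real.sin (θ * x)) (θ * Real.cos (θ * x)) x := by
    simpa [mul_comm] using ((hasDerivAt_id x).const_mul θ).sin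
  have hpow (x : ℝ) : HasDerivAt (fun x : ℝ => (1 - x ^ 2) ^ (n + 1))
      (-(2 * (n + 1)) * (x * (1 - x ^ 2) ^ n)) x := by
    refine (((hasDerivAt_pow 2 x).const_sub 1).fun_pow (n + 1)).congr_deriv ?_
    push_cast [add_tsub_cancel_right]
    ring
  have hparts := intervalIntegral.integral_mul_deriv_eq_deriv_mul (a := -1) (b := 1)
    (fun x _ => hpow x) (fun x _ => hsin x)
    (Continuous.intervalIntegrable (by fun_prop) _ _)
    (Continuous.intervalIntegrable (by fun_prop) _ _)
  rw [poissonCosIntegral, ← intervalIntegral.integral_const_mul,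
    ← intervalIntegral.integral_const_mul]
  calc ∫ x in (-1 : ℝ)..1, θ * (Real.cos (θ * x) * (1 - x ^ 2) ^ (n + 1))
      = ∫ x in (-1 : ℝ)..1, (1 - x ^ 2) ^ (n + 1) * (θ * Real.cos (θ * x)) := by
        congr with x
        ring
    _ = -∫ x in (-1 : ℝ)..1, -(2 * (n + 1)) * (x * (1 - x ^ 2) ^ n) * Real.sin (θ * x) := by
        simpa using hparts
    _ = ∫ x in (-1 : ℝ)..1, 2 * (n + 1) * (Real.sin (θ * x) * x * (1 - x ^ 2) ^ n) := by
        rw [← intervalIntegral.integral_neg]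
        congr with x
        ring

theorem hasDerivAt_poissonCosIntegral (n : ℕ) (θ : ℝ) :
    HasDerivAt (poissonCosIntegral n) (-(θ / (2 * (n + 1)) * poissonCosIntegral (n + 1) θ)) θ := by
  have hderiv : HasDerivAt (poissonCosIntegral n)
      (∫ x in (-1 : ℝ)..1, -Real.sin (θ * x) * x * (1 - x ^ 2) ^ n) θ :=
    hasDerivAt_integral_cos_smul (f := fun x : ℝ => (1 - x ^ 2) ^ n)
      (Continuous.intervalIntegrable (by fun_prop) _ _) θ
  refine hderiv.congr_deriv ?_
  rw [div_mul_eq_mul_div, mul_poissonCosIntegral_succ, mul_div_cancel_left₀ _ (by positivity)]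
  simp only [neg_mul, intervalIntegral.integral_neg]

theorem iterate_deriv_div_sin_div_self (n : ℕ) {θ : ℝ} (hθ : θ ≠ 0) :
    ((fun f : ℝ → ℝ => fun t : ℝ => deriv f t / t)^[n] (fun t : ℝ => Real.sin t / t)) θ
      = (-1) ^ n * poissonCosIntegral n θ / (2 ^ (n + 1) * n.factorial) := by
  induction n generalizing θ with
  | zero => simp [poissonCosIntegral_zero hθ]
  | succ n ih =>
    have hlocal : ((fun f : ℝ → ℝ => fun t : ℝ => deriv f t / t)^[n] fun t => Real.sin t / t)
        =ᶠ[nhds θ] fun φ => (-1) ^ n * poissonCosIntegral n φ / (2 ^ (n + 1) * n.factorial) :=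
      (isOpen_ne.eventually_mem hθ).mono fun φ hφ => ih hφ
    rw [Function.iterate_succ_apply', hlocal.deriv_eq,
      (((hasDerivAt_poissonCosIntegral n θ).const_mul _).div_const _).deriv, Nat.factorial_succ]
    push_cast
    field_simp
    ring

theorem sphericalBessel_eq_poissonCosIntegral (n : ℕ) {θ : ℝ} (hθ : θ ≠ 0) :
    sphericalBessel n θ = θ ^ n / (2 ^ (n + 1) * n.factorial) * poissonCosIntegral n θ := by
  rw [sphericalBessel, iterate_deriv_div_sin_div_self n hθ, mul_div_assoc, ← mul_assoc, ← mul_pow,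
    neg_mul_neg, mul_one]
  ring

theorem integral_one_sub_sq_pow_smul_cexp (n : ℕ) (θ : ℝ) :
    ∫ x in (-1 : ℝ)..1, (1 - x ^ 2) ^ n • Complex.exp (-(Complex.I * θ) * x)
      = poissonCosIntegral n θ := by
  have heven : (fun x : ℝ => (((1 - x ^ 2) ^ n : ℝ) : ℂ)).Even := fun x => by
    simp only [even_two.neg_pow]
  have h := integral_cexp_neg_smul_eq_integral_cos_smul (a := 1) heven
    (Continuous.intervalIntegrable (by fun_prop) _ _) θ
  rw [poissonCosIntegral, ← intervalIntegral.integral_ofReal]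
  simpa [mul_comm] using h

theorem integral_legendre_smul_cexp (n : ℕ) {θ : ℝ} (hθ : θ ≠ 0) :
    ∫ x in (-1 : ℝ)..1, legendre n x • Complex.exp (-(Complex.I * θ) * x)
      = 2 * (-Complex.I) ^ n * sphericalBessel n θ := by
  have hsmooth : ContDiff ℝ n fun x : ℝ => Complex.exp (-(Complex.I * θ) * x) :=
    (contDiff_const.mul Complex.ofRealCLM.contDiff).cexp
  have hfactorial : (n.factorial : ℂ) ≠ 0 := by exact_mod_cast n.factorial_ne_zero
  rw [integral_legendre_smul hsmooth, iteratedDeriv_cexp_const_mul_ofReal,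
    sphericalBessel_eq_poissonCosIntegral n hθ]
  simp only [← mul_smul_comm, intervalIntegral.integral_const_mul]
  rw [integral_one_sub_sq_pow_smul_cexp, ← neg_mul, mul_pow, Complex.real_smul]
  push_cast
  field_simp
  ring

theorem flat_coupling_eq_sphericalBessel_general (n : ℕ) {ωc t : ℝ} (hωc : ωc ≠ 0) (ht : t ≠ 0) :
    (∫ ω in (0 : ℝ)..ωc, (legendre n (2 * ω / ωc - 1) : ℂ) * Complex.exp (-Complex.I * ω * t))
      = (ωc : ℂ) * Complex.exp (-Complex.I * ωc * t / 2) * (-Complex.I) ^ n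
          * (sphericalBessel n (ωc * t / 2) : ℂ) := by
  set θ : ℝ := ωc * t / 2 with hθ
  have hωc' : (ωc : ℂ) ≠ 0 := by exact_mod_cast hωc
  have hphase (ω : ℝ) :
      (legendre n (2 * ω / ωc - 1) : ℂ) * Complex.exp (-Complex.I * ω * t)
        = Complex.exp (-Complex.I * ωc * t / 2) * (legendre n (2 / ωc * ω - 1) •
            Complex.exp (-(Complex.I * θ) * (2 / ωc * ω - 1 : ℝ))) := by
    rw [Complex.real_smul, mul_left_comm, ← Complex.exp_add, hθ, div_mul_eq_mul_div]
    congr 2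
    push_cast
    field_simp
    ring
  have hsubst := intervalIntegral.integral_comp_mul_sub (a := 0) (b := ωc)
    (fun x : ℝ => legendre n x • Complex.exp (-(Complex.I * θ) * x))
    (div_ne_zero two_ne_zero hωc) 1
  rw [mul_zero, zero_sub, div_mul_cancel₀ _ hωc, show (2 : ℝ) - 1 = 1 by norm_num,
    integral_legendre_smul_cexp n (by positivity), Complex.real_smul] at hsubst
  simp only [hphase, intervalIntegral.integral_const_mul, hsubst]
  push_cast
  field_simp

/-- The flat-spectral-density chain coupling satisfies
`∫₀^{ω_c} P_n(2ω/ω_c − 1) e^{−iωt} dω = ω_c e^{−i ω_c t/2} (−i)^n j_n(ω_c t/2)`. -/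
theorem flat_coupling_eq_sphericalBessel (n : ℕ) (ωc t : ℝ) (hωc : 0 < ωc) (ht : 0 < t) :
    (∫ ω in (0 : ℝ)..ωc, (legendre n (2 * ω / ωc - 1) : ℂ) * Complex.exp (-Complex.I * ω * t))
      = (ωc : ℂ) * Complex.exp (-Complex.I * ωc * t / 2) * (-Complex.I) ^ n
          * (sphericalBessel n (ωc * t / 2) : ℂ) :=
  flat_coupling_eq_sphericalBessel_general n hωc.ne' ht.ne'
end

section
/- For every fixed natural number n, the function θ ↦ ∫_{−1}^{1} P_n(x) e^{−iθx} dx − (2 (−i)^n / θ) sin(θ − nπ/2) is O(θ^{−2}) as θ → ∞, where P_n is the Legendre polynomial. -/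
open MeasureTheory Asymptotics Filter

/-!
Integrating by parts once leaves the endpoint contributions of `P_n` divided by `-iθ` and a
remainder `∫ P_n'(x) e^{-iθx} dx / (iθ)`; a second integration by parts shows that the remainder is
`O(θ⁻²)`. At an endpoint `a = ±1`, writing `x² - 1 = (x - a)(x + a)` in Rodrigues' formula, only the
term of Leibniz' rule with all `n` derivatives on `(x - a)^n` survives, so `P_n(a) = a^n`. The two
endpoint exponentials with weights `1` and `(-1)^n` then combine into the shifted sine.
-/

open Complex in
theorem exp_sub_neg_one_pow_mul_exp (n : ℕ) (z : ℂ) :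
    exp (-I * z) - (-1) ^ n * exp (I * z) = -2 * I * (-I) ^ n * sin (z - n * Real.pi / 2) := by
  have hsq : (-I) ^ n * (-I) ^ n = (-1) ^ n := by rw [← mul_pow]; simp
  have hinv : (-I) ^ n * I ^ n = 1 := by rw [← mul_pow]; simp
  have hneg : exp (-(z - n * Real.pi / 2) * I) = exp (-I * z) * I ^ n := by
    have hI : exp (n * (Real.pi / 2 * I)) = I ^ n := by rw [exp_nat_mul, exp_pi_div_two_mul_I]
    rw [← hI, ← exp_add]
    ring_nf
  have hpos : exp ((z - n * Real.pi / 2) * I) = exp (I * z) * (-I) ^ n := by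
    have hI : exp (n * (-Real.pi / 2 * I)) = (-I) ^ n := by
      rw [exp_nat_mul, exp_neg_pi_div_two_mul_I]
    rw [← hI, ← exp_add]
    ring_nf
  rw [sin, hneg, hpos]
  linear_combination exp (I * z) * hsq - exp (-I * z) * hinv
    + ((-I) ^ n * (exp (-I * z) * I ^ n - exp (I * z) * (-I) ^ n)) * I_sq

section IntervalFourierIntegral

variable {E : Type*} [NormedAddCommGroup E] [NormedSpace ℂ E] {a b : ℝ} {f f' f'' : ℝ → E}

/-- The Fourier integral `∫ₐᵇ e^{-iθx} f(x) dx` of `f` over the interval from `a` to `b`. -/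
noncomputable def intervalFourierIntegral (a b : ℝ) (f : ℝ → E) (θ : ℝ) : E :=
  ∫ x in a..b, Complex.exp (-Complex.I * θ * x) • f x

/-- The boundary term `e^{-iθb} f(b) - e^{-iθa} f(a)` that arises when the Fourier integral of `f`
from `a` to `b` is integrated by parts. -/
noncomputable def fourierBoundaryTerm (a b : ℝ) (f : ℝ → E) (θ : ℝ) : E :=
  Complex.exp (-Complex.I * θ * b) • f b - Complex.exp (-Complex.I * θ * a) • f a

theorem norm_exp_neg_I_mul_mul (θ x : ℝ) : ‖Complex.exp (-Complex.I * θ * x)‖ = 1 := by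
  simp [Complex.norm_exp]

theorem intervalFourierIntegral_isBigO_one (a b : ℝ) (f : ℝ → E) (l : Filter ℝ) :
    intervalFourierIntegral a b f =O[l] fun _ => (1 : ℝ) := by
  refine .of_bound |∫ x in a..b, ‖f x‖| (.of_forall fun θ => ?_)
  simpa only [intervalFourierIntegral, norm_smul, norm_exp_neg_I_mul_mul, one_mul, norm_one,
    mul_one] using
    intervalIntegral.norm_integral_le_abs_integral_norm (μ := volume) (a := a) (b := b)
      (f := fun x : ℝ => Complex.exp (-Complex.I * θ * x) • f x)

theorem fourierBoundaryTerm_isBigO_one (a b : ℝ) (f : ℝ → E) (l : Filter ℝ) :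
    fourierBoundaryTerm a b f =O[l] fun _ => (1 : ℝ) := by
  refine .of_bound (‖f b‖ + ‖f a‖) (.of_forall fun θ => ?_)
  simpa only [fourierBoundaryTerm, norm_smul, norm_exp_neg_I_mul_mul, one_mul, norm_one, mul_one]
    using norm_sub_le (Complex.exp (-Complex.I * θ * b) • f b)
      (Complex.exp (-Complex.I * θ * a) • f a)

theorem hasDerivAt_exp_mul_ofReal (c : ℂ) (x : ℝ) :
    HasDerivAt (fun y : ℝ => Complex.exp (c * y)) (c * Complex.exp (c * x)) x := by
  simpa [mul_comm] using ((hasDerivAt_id (x : ℂ)).const_mul c).cexp.comp_ofReal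

theorem I_div_ofReal_isBigO_inv (l : Filter ℝ) :
    (fun θ : ℝ => Complex.I / (θ : ℂ)) =O[l] fun θ => θ⁻¹ :=
  isBigO_of_le l fun θ => by simp

variable [CompleteSpace E]

theorem intervalFourierIntegral_of_hasDerivWithinAt
    (hf : ∀ x ∈ Set.uIcc a b, HasDerivWithinAt f (f' x) (Set.uIcc a b) x)
    (hf' : IntervalIntegrable f' volume a b) (θ : ℝ) :
    intervalFourierIntegral a b f' θ =
      fourierBoundaryTerm a b f θ + (Complex.I * θ) • intervalFourierIntegral a b f θ := by
  have hparts := intervalIntegral.integral_smul_deriv_eq_deriv_smul_of_hasDerivWithinAt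
    (fun x _ => (hasDerivAt_exp_mul_ofReal (-Complex.I * θ) x).hasDerivWithinAt) hf
    (by apply Continuous.intervalIntegrable; fun_prop) hf'
  simp only [mul_smul (-Complex.I * θ), intervalIntegral.integral_smul] at hparts
  simpa [intervalFourierIntegral, fourierBoundaryTerm] using hparts

theorem intervalFourierIntegral_sub_eq
    (hf : ∀ x ∈ Set.uIcc a b, HasDerivWithinAt f (f' x) (Set.uIcc a b) x)
    (hf' : IntervalIntegrable f' volume a b) {θ : ℝ} (hθ : θ ≠ 0) :
    intervalFourierIntegral a b f θ - (Complex.I / θ) • fourierBoundaryTerm a b f θ =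
      -((Complex.I / θ) • intervalFourierIntegral a b f' θ) := by
  have hcancel : Complex.I / θ * (Complex.I * θ) = -1 := by
    rw [← Complex.I_mul_I]
    field_simp [Complex.ofReal_ne_zero.mpr hθ]
  rw [intervalFourierIntegral_of_hasDerivWithinAt hf hf', smul_add, smul_smul, hcancel]
  module

open Bornology in
theorem intervalFourierIntegral_isBigO_inv
    (hf : ∀ x ∈ Set.uIcc a b, HasDerivWithinAt f (f' x) (Set.uIcc a b) x)
    (hf' : IntervalIntegrable f' volume a b) :
    intervalFourierIntegral a b f =O[cobounded ℝ] fun θ => θ⁻¹ := by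
  have hbdd : (fun θ => fourierBoundaryTerm a b f θ - intervalFourierIntegral a b f' θ)
      =O[cobounded ℝ] fun _ => (1 : ℝ) :=
    (fourierBoundaryTerm_isBigO_one a b f _).sub (intervalFourierIntegral_isBigO_one a b f' _)
  refine ((I_div_ofReal_isBigO_inv _).smul hbdd).congr' ?_ (.of_forall fun θ => by simp)
  filter_upwards [eventually_ne_cobounded 0] with θ hθ
  rw [smul_sub, sub_eq_add_neg, ← intervalFourierIntegral_sub_eq hf hf' hθ, add_sub_cancel]

open Bornology in
theorem intervalFourierIntegral_sub_isBigO_of_hasDerivWithinAt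
    (hf : ∀ x ∈ Set.uIcc a b, HasDerivWithinAt f (f' x) (Set.uIcc a b) x)
    (hf' : ∀ x ∈ Set.uIcc a b, HasDerivWithinAt f' (f'' x) (Set.uIcc a b) x)
    (hf'' : IntervalIntegrable f'' volume a b) :
    (fun θ => intervalFourierIntegral a b f θ - (Complex.I / θ) • fourierBoundaryTerm a b f θ)
      =O[cobounded ℝ] fun θ => 1 / θ ^ 2 := by
  have hf'_int : IntervalIntegrable f' volume a b :=
    ContinuousOn.intervalIntegrable fun x hx => (hf' x hx).continuousWithinAt
  have hremainder :=
    ((I_div_ofReal_isBigO_inv _).smul (intervalFourierIntegral_isBigO_inv hf' hf'')).neg_left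
  refine hremainder.congr' ?_ (.of_forall fun θ => by simp [sq])
  filter_upwards [eventually_ne_cobounded 0] with θ hθ
  exact (intervalFourierIntegral_sub_eq hf hf'_int hθ).symm

open Bornology in
theorem intervalFourierIntegral_sub_isBigO_of_contDiff (a b : ℝ) (hf : ContDiff ℝ 2 f) :
    (fun θ => intervalFourierIntegral a b f θ - (Complex.I / θ) • fourierBoundaryTerm a b f θ)
      =O[cobounded ℝ] fun θ => 1 / θ ^ 2 := by
  have hf' : ContDiff ℝ 1 (deriv f) := hf.deriv'
  exact intervalFourierIntegral_sub_isBigO_of_hasDerivWithinAt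
    (fun x _ => (hf.differentiable (by simp) x).hasDerivAt.hasDerivWithinAt)
    (fun x _ => (hf'.differentiable (by simp) x).hasDerivAt.hasDerivWithinAt)
    ((hf'.continuous_deriv le_rfl).intervalIntegrable a b)

end IntervalFourierIntegral

open ContDiff in
theorem contDiff_legendre (n : ℕ) : ContDiff ℝ ∞ (legendre n) := by
  unfold legendre
  rw [iteratedDeriv_eq_iterate]
  exact contDiff_const.mul (ContDiff.iterate_deriv n (by fun_prop))

theorem iteratedDeriv_sub_pow_mul_self {𝕜 : Type*} [NontriviallyNormedField 𝕜] {n : ℕ} {a : 𝕜}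
    {g : 𝕜 → 𝕜} (hg : ContDiffAt 𝕜 n g a) :
    iteratedDeriv n (fun z => (z - a) ^ n * g z) a = n.factorial * g a := by
  have hpow (k : ℕ) :
      iteratedDeriv k (fun z => (z - a) ^ n) a = n.descFactorial k * 0 ^ (n - k) := by
    simp only [iteratedDeriv_comp_sub_const k (· ^ n) a, iteratedDeriv_pow, sub_self]
  rw [iteratedDeriv_fun_mul (by fun_prop) hg, Finset.sum_eq_single n]
  · simp [hpow, Nat.descFactorial_self]
  · intro k hk hkn
    have hlt : k < n := by grind
    simp [hpow, (Nat.sub_pos_of_lt hlt).ne']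
  · simp

theorem legendre_of_sq_eq_one (n : ℕ) {a : ℝ} (ha : a ^ 2 = 1) : legendre n a = a ^ n := by
  have hfactor : (fun y : ℝ => (y ^ 2 - 1) ^ n) = fun y => (y - a) ^ n * (y + a) ^ n := by
    ext y
    rw [← mul_pow, ← ha]
    ring
  have hfact : (n.factorial : ℝ) ≠ 0 := mod_cast n.factorial_ne_zero
  rw [legendre, hfactor, iteratedDeriv_sub_pow_mul_self (by fun_prop), ← two_mul, mul_pow]
  field_simp

theorem I_div_smul_fourierBoundaryTerm_legendre (n : ℕ) (θ : ℝ) :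
    (Complex.I / θ) • fourierBoundaryTerm (-1) 1 (fun x => (legendre n x : ℂ)) θ =
      (2 * (-Complex.I) ^ n / (θ : ℂ)) * (Real.sin (θ - n * Real.pi / 2) : ℂ) := by
  have hboundary : fourierBoundaryTerm (-1) 1 (fun x => (legendre n x : ℂ)) θ =
      Complex.exp (-Complex.I * θ) - (-1) ^ n * Complex.exp (Complex.I * θ) := by
    rw [fourierBoundaryTerm, legendre_of_sq_eq_one n (one_pow 2),
      legendre_of_sq_eq_one n (by norm_num)]
    simp [mul_comm]
  rw [hboundary, exp_sub_neg_one_pow_mul_exp, smul_eq_mul]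
  push_cast
  linear_combination
    (-2 * (-Complex.I) ^ n * Complex.sin (θ - n * Real.pi / 2) / θ) * Complex.I_sq

/-- As `θ → ∞`,
`∫_{−1}^{1} P_n(x) e^{−iθx} dx − (2(−i)^n/θ) sin(θ − nπ/2) = O(θ^{−2})`. -/
theorem legendre_fourier_asymptotics (n : ℕ) :
    (fun θ : ℝ =>
        (∫ x in (-1 : ℝ)..1, (legendre n x : ℂ) * Complex.exp (-Complex.I * θ * x))
          - (2 * (-Complex.I) ^ n / (θ : ℂ)) * (Real.sin (θ - n * Real.pi / 2) : ℂ))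
      =O[atTop] fun θ : ℝ => 1 / θ ^ 2 := by
  have hsmooth : ContDiff ℝ 2 fun x => (legendre n x : ℂ) :=
    Complex.ofRealCLM.contDiff.comp ((contDiff_legendre n).of_le (by norm_cast))
  have hendpoints := intervalFourierIntegral_sub_isBigO_of_contDiff (-1) 1 hsmooth
  refine (hendpoints.mono IsOrderBornology.atTop_le_cobounded).congr_left fun θ => ?_
  rw [I_div_smul_fourierBoundaryTerm_legendre, intervalFourierIntegral]
  simp only [smul_eq_mul, mul_comm]
end

section
/- For every fixed natural number n, the spherical Bessel function of the first kind satisfies j_n(θ) − sin(θ − nπ/2)/θ − (n(n+1)/(2θ²)) cos(θ − nπ/2) = O(θ^{−3}) as θ → ∞. -/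
/-!
On `ℝ \ {0}`, `j_n` is the real part of the spherical Hankel function
`h_n(z) = (-i)^(n+1) (e^{iz} / z) y_n(i / z)`, where `y_n` is a Bessel polynomial, because both
satisfy `f_{n+1} = (n / z) f_n - f_n'`. Hence expanding `j_n` at infinity amounts to truncating the
polynomial `y_n` at the origin, and `y_n(x) = 1 + n(n+1)/2 x + O(x²)` gives the two leading terms.
-/

open Asymptotics Filter

open Polynomial Bornology Topology
open Complex (exp I)

theorem isBigO_eval_sub_sum_range {R : Type*} [NormedRing R] [NormOneClass R] [NormMulClass R]
    (p : R[X]) (m : ℕ) :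
    (fun z => p.eval z - ∑ k ∈ Finset.range m, p.coeff k * z ^ k) =O[𝓝 0] fun z => z ^ m := by
  induction m generalizing p with
  | zero => simpa using (p.continuous.tendsto 0).isBigO_one R
  | succ m ih =>
    refine ((ih p.divX).mul (isBigO_refl id (𝓝 0))).congr (fun z => ?_) fun z => (pow_succ z m).symm
    conv_rhs => rw [← p.divX_mul_X_add]
    simp [Finset.sum_range_succ', sub_mul, Finset.sum_mul, pow_succ, mul_assoc]

/-- The Bessel polynomials `y_n(x) = ∑ k ≤ n, (n + k)! / ((n - k)! k!) (x / 2) ^ k`, the polynomial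
factors of the spherical Hankel functions. They are encoded by a differential recurrence, which is
free of denominators and so makes sense over every semiring. -/
noncomputable def besselPolynomial (R : Type*) [Semiring R] : ℕ → R[X]
  | 0 => 1
  | n + 1 =>
    (1 + ((n : R[X]) + 1) * X) * besselPolynomial R n + X ^ 2 * derivative (besselPolynomial R n)

section besselPolynomial

variable (R : Type*) [Semiring R] (n : ℕ)

theorem besselPolynomial_coeff_zero : (besselPolynomial R n).coeff 0 = 1 := by
  induction n with
  | zero => simp [besselPolynomial]
  | succ n ih => simp [besselPolynomial, ih, mul_coeff_zero]

theorem besselPolynomial_coeff_one : (besselPolynomial R n).coeff 1 = ((n + 1).choose 2 : R) := by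
  induction n with
  | zero => simp [besselPolynomial, coeff_one]
  | succ n ih =>
    have hchoose : (n + 1 + 1).choose 2 = (n + 1).choose 2 + (n + 1) := by
      rw [Nat.choose_succ_succ' (n + 1) 1, Nat.choose_one_right, add_comm]
    simp [besselPolynomial, mul_coeff_one, mul_coeff_zero, coeff_one,
      besselPolynomial_coeff_zero, ih, hchoose]

end besselPolynomial

/-- The spherical Hankel function of the first kind `h_n^{(1)}`, whose real part on the real line is
`j_n`. Its elementary closed form `(-i)^(n+1) (e^{iz} / z) y_n(i / z)` is taken as the definition;
at `z = 0` it takes the junk value `0`. -/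
noncomputable def sphericalHankel (n : ℕ) (z : ℂ) : ℂ :=
  (-I) ^ (n + 1) * (exp (z * I) / z) * (besselPolynomial ℂ n).eval (I / z)

/-- The first `m` terms of the expansion of `h_n^{(1)}` in powers of `1 / z`, used to approximate it
at infinity. -/
noncomputable def sphericalHankelPartialSum (n m : ℕ) (z : ℂ) : ℂ :=
  (-I) ^ (n + 1) * (exp (z * I) / z) *
    ∑ k ∈ Finset.range m, (besselPolynomial ℂ n).coeff k * (I / z) ^ k

theorem hasDerivAt_sphericalHankel (n : ℕ) {z : ℂ} (hz : z ≠ 0) :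
    HasDerivAt (sphericalHankel n) (n / z * sphericalHankel n z - sphericalHankel (n + 1) z) z := by
  have hexp : HasDerivAt (fun w => exp (w * I)) (exp (z * I) * I) z := by
    simpa using ((hasDerivAt_id z).mul_const I).cexp
  have hexp_div : HasDerivAt (fun w => exp (w * I) / w) (exp (z * I) * (I / z - 1 / z ^ 2)) z :=
    (hexp.fun_div (hasDerivAt_id z) hz).congr_deriv (by simp only [id]; field_simp)
  have hpoly : HasDerivAt (fun w => (besselPolynomial ℂ n).eval (I / w))
      ((besselPolynomial ℂ n).derivative.eval (I / z) * (-I / z ^ 2)) z :=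
    (((besselPolynomial ℂ n).hasDerivAt (I / z)).comp z
      ((hasDerivAt_inv hz).const_mul I)).congr_deriv (by ring)
  refine ((hexp_div.const_mul ((-I) ^ (n + 1))).mul hpoly).congr_deriv ?_
  simp only [sphericalHankel, besselPolynomial, eval_add, eval_mul, eval_one, eval_X, eval_pow,
    eval_natCast, pow_succ (-I) (n + 1)]
  field_simp
  ring_nf
  simp only [Complex.I_sq, Complex.I_pow_three]
  ring

theorem sphericalHankel_sub_partialSum_isBigO (n m : ℕ) :
    (fun z => sphericalHankel n z - sphericalHankelPartialSum n m z)
      =O[cobounded ℂ] fun z => exp (z * I) / z ^ (m + 1) := by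
  have hzero : Tendsto (fun z => I / z) (cobounded ℂ) (𝓝 0) := by
    simpa [div_eq_mul_inv] using tendsto_inv₀_cobounded.const_mul I
  have hpoly := (isBigO_eval_sub_sum_range (besselPolynomial ℂ n) m).comp_tendsto hzero
  have hprefactor : (fun z => (-I) ^ (n + 1) * (exp (z * I) / z))
      =O[cobounded ℂ] fun z => exp (z * I) / z :=
    (isBigO_refl _ _).const_mul_left _
  have hnorm (z : ℂ) : ‖exp (z * I) / z * (I / z) ^ m‖ = ‖exp (z * I) / z ^ (m + 1)‖ := by
    simp only [norm_mul, norm_div, norm_pow, Complex.norm_I]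
    ring
  refine ((hprefactor.mul hpoly).congr_left fun z => ?_).trans
    (isBigO_of_le _ fun z => (hnorm z).le)
  simp only [sphericalHankel, sphericalHankelPartialSum, Function.comp_apply, mul_sub]

theorem sphericalBessel_succ_of_hasDerivAt {n : ℕ} {θ j' : ℝ} (hθ : θ ≠ 0)
    (hj : HasDerivAt (sphericalBessel n) j' θ) :
    sphericalBessel (n + 1) θ = n / θ * sphericalBessel n θ - j' := by
  have hiterate : (fun f : ℝ → ℝ => fun t : ℝ => deriv f t / t)^[n] (fun t => Real.sin t / t)
      =ᶠ[𝓝 θ] fun t => sphericalBessel n t / (-t) ^ n := by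
    filter_upwards [eventually_ne_nhds hθ] with t ht
    rw [sphericalBessel, mul_div_cancel_left₀ _ (pow_ne_zero n (neg_ne_zero.mpr ht))]
  have hpow : HasDerivAt (fun t => (-t) ^ n) (n / θ * (-θ) ^ n) θ := by
    refine ((hasDerivAt_neg θ).fun_pow n).congr_deriv ?_
    cases n with
    | zero => simp
    | succ n =>
      rw [Nat.add_sub_cancel, pow_succ]
      field_simp
  have hne : (-θ) ^ n ≠ 0 := pow_ne_zero n (neg_ne_zero.mpr hθ)
  have hderiv := ((hj.fun_div hpow hne).congr_of_eventuallyEq hiterate).deriv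
  rw [sphericalBessel, Function.iterate_succ_apply', hderiv, pow_succ]
  field_simp
  ring

theorem sphericalBessel_eq_re_sphericalHankel (n : ℕ) {θ : ℝ} (hθ : θ ≠ 0) :
    sphericalBessel n θ = (sphericalHankel n θ).re := by
  induction n generalizing θ with
  | zero => simp [sphericalBessel, sphericalHankel, besselPolynomial, Complex.exp_ofReal_mul_I_im]
  | succ n ih =>
    have heq : sphericalBessel n =ᶠ[𝓝 θ] fun t => (sphericalHankel n t).re :=
      (eventually_ne_nhds hθ).mono fun t ht => ih ht
    have hderiv := (hasDerivAt_sphericalHankel n (Complex.ofReal_ne_zero.mpr hθ)).real_of_complex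
    have hcast : (n / θ : ℂ) = (n / θ : ℝ) := by push_cast; rfl
    rw [sphericalBessel_succ_of_hasDerivAt hθ (hderiv.congr_of_eventuallyEq heq), ih hθ, hcast,
      Complex.sub_re, Complex.re_ofReal_mul, sub_sub_cancel]

theorem sphericalBessel_sub_re_partialSum_isBigO (n m : ℕ) :
    (fun θ : ℝ => sphericalBessel n θ - (sphericalHankelPartialSum n m θ).re)
      =O[atTop] fun θ => 1 / θ ^ (m + 1) := by
  have hhankel := (sphericalHankel_sub_partialSum_isBigO n m).comp_tendsto
    (RCLike.tendsto_ofReal_atTop_cobounded ℂ)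
  have hnorm (θ : ℝ) : ‖exp (θ * I) / (θ : ℂ) ^ (m + 1)‖ = ‖1 / θ ^ (m + 1)‖ := by
    simp [Complex.norm_exp_ofReal_mul_I]
  refine .trans (.of_norm_eventuallyLE ?_) (hhankel.norm_left.trans
    (isBigO_of_le _ fun θ => (hnorm θ).le))
  filter_upwards [eventually_ne_atTop 0] with θ hθ
  rw [sphericalBessel_eq_re_sphericalHankel n hθ, ← Complex.sub_re]
  exact Complex.abs_re_le_norm _

theorem neg_I_pow_mul_exp_mul_I (n : ℕ) (z : ℂ) :
    (-I) ^ n * exp (z * I) = exp ((z - n * Real.pi / 2) * I) := by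
  rw [← Complex.exp_neg_pi_div_two_mul_I, ← Complex.exp_nat_mul, ← Complex.exp_add]
  ring_nf

theorem re_sphericalHankelPartialSum_two (n : ℕ) (θ : ℝ) :
    (sphericalHankelPartialSum n 2 θ).re = Real.sin (θ - n * Real.pi / 2) / θ
      + (n : ℝ) * ((n : ℝ) + 1) / (2 * θ ^ 2) * Real.cos (θ - n * Real.pi / 2) := by
  set φ : ℝ := θ - n * Real.pi / 2 with hφ
  have hphase : (-I) ^ n * exp (θ * I) = Real.cos φ + Real.sin φ * I := by
    rw [neg_I_pow_mul_exp_mul_I, Complex.ofReal_cos, Complex.ofReal_sin, ← Complex.exp_mul_I, hφ]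
    push_cast
    rfl
  have hcartesian : sphericalHankelPartialSum n 2 θ =
      (Real.sin φ / θ + n * (n + 1) / (2 * θ ^ 2) * Real.cos φ : ℝ)
        + (n * (n + 1) / (2 * θ ^ 2) * Real.sin φ - Real.cos φ / θ : ℝ) * I := by
    calc sphericalHankelPartialSum n 2 θ
        = -I * ((-I) ^ n * exp (θ * I)) / θ * (1 + n * (n + 1) / 2 * (I / θ)) := by
          simp only [sphericalHankelPartialSum, Finset.sum_range_succ, Finset.sum_range_zero,
            besselPolynomial_coeff_zero, besselPolynomial_coeff_one, Nat.cast_choose_two]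
          push_cast
          ring
      _ = _ := by
          rw [hphase]
          push_cast
          ring_nf
          simp only [Complex.I_sq, Complex.I_pow_three]
          ring
  rw [hcartesian, ← Complex.mk_eq_add_mul_I]

/-- As `θ → ∞`,
`j_n(θ) − sin(θ − nπ/2)/θ − (n(n+1)/(2θ²)) cos(θ − nπ/2) = O(θ^{−3})`. -/
theorem sphericalBessel_asymptotics (n : ℕ) :
    (fun θ : ℝ =>
        sphericalBessel n θ - Real.sin (θ - n * Real.pi / 2) / θ
          - ((n : ℝ) * ((n : ℝ) + 1) / (2 * θ ^ 2)) * Real.cos (θ - n * Real.pi / 2))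
      =O[atTop] fun θ : ℝ => 1 / θ ^ 3 := by
  simpa only [re_sphericalHankelPartialSum_two, sub_add_eq_sub_sub] using
    sphericalBessel_sub_re_partialSum_isBigO n 2
end

section
/- For every Schwartz function f : ℝ → ℂ, lim_{L → ∞} ∫_ℝ f(t) · sin(Lt)/(πt) dt = f(0); that is, the sinc kernel t ↦ sin(Lt)/(πt) is an approximate Dirac delta as L → ∞. -/
open MeasureTheory Filter

/-!
The kernel `sin (L t) / (π t)` is the Fourier transform of the indicator function of
`[-L / 2π, L / 2π]`. As the Fourier transform is self-adjoint for the bilinear pairing, integrating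
`f` against the kernel amounts to integrating `𝓕 f` over this interval. As `L → ∞` the intervals
exhaust the line, and `∫ 𝓕 f = f 0` by Fourier inversion.
-/

open Set
open scoped FourierTransform Topology Real

section FourierIndicator

variable {V E : Type*} [NormedAddCommGroup V] [InnerProductSpace ℝ V] [FiniteDimensional ℝ V]
  [MeasurableSpace V] [BorelSpace V] [NormedAddCommGroup E] [NormedSpace ℂ E] [CompleteSpace E]
  {f : V → E}

theorem integral_fourier_smul_eq_integral_smul_fourier {g : V → ℂ} (hg : Integrable g)
    (hf : Integrable f) : ∫ v, 𝓕 g v • f v = ∫ v, g v • 𝓕 f v := by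
  simpa only [flip_innerₗ] using! VectorFourier.integral_fourierIntegral_smul_eq_flip
    (L := innerₗ V) Real.continuous_fourierChar continuous_inner hg hf

theorem integral_fourier_indicator_smul {s : Set V} (hs : MeasurableSet s) (hs_fin : volume s ≠ ⊤)
    (hf : Integrable f) : ∫ v, 𝓕 (s.indicator (1 : V → ℂ)) v • f v = ∫ w in s, 𝓕 f w := by
  have hs_int : Integrable (s.indicator (1 : V → ℂ)) :=
    (integrable_indicator_iff hs).2 (integrableOn_const hs_fin)
  rw [integral_fourier_smul_eq_integral_smul_fourier hs_int hf, ← integral_indicator hs]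
  simp only [← indicator_smul_left, Pi.one_apply, one_smul]

theorem integral_fourier_eq_apply_zero (hf : Integrable f) (h𝓕f : Integrable (𝓕 f))
    (h0 : ContinuousAt f 0) : ∫ w, 𝓕 f w = f 0 := by
  rw [← hf.fourierInv_fourier_eq h𝓕f h0, Real.fourierInv_eq]
  simp only [inner_zero_right, AddChar.map_zero_eq_one, one_smul]

theorem tendsto_integral_fourier_indicator_smul {ι : Type*} {l : Filter ι}
    [l.IsCountablyGenerated] {φ : ι → Set V} (hφ : AECover volume l φ)
    (hφ_fin : ∀ i, volume (φ i) ≠ ⊤) (hf : Integrable f) (h𝓕f : Integrable (𝓕 f))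
    (h0 : ContinuousAt f 0) :
    Tendsto (fun i => ∫ v, 𝓕 ((φ i).indicator (1 : V → ℂ)) v • f v) l (𝓝 (f 0)) := by
  simp only [integral_fourier_indicator_smul (hφ.measurableSet _) (hφ_fin _) hf]
  rw [← integral_fourier_eq_apply_zero hf h𝓕f h0]
  exact hφ.integral_tendsto_of_countably_generated h𝓕f

end FourierIndicator

theorem fourier_indicator_Icc_neg_self {R t : ℝ} (hR : 0 ≤ R) (ht : t ≠ 0) :
    𝓕 ((Icc (-R) R).indicator (1 : ℝ → ℂ)) t =
      ((Real.sin (2 * π * R * t) / (π * t) : ℝ) : ℂ) := by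
  have hc : -2 * π * t ≠ 0 := by simp [Real.pi_ne_zero, ht]
  calc 𝓕 ((Icc (-R) R).indicator (1 : ℝ → ℂ)) t
    _ = ∫ w in -R..R, Complex.exp (↑(-2 * π * w * t) * Complex.I) := by
      rw [Real.fourier_real_eq_integral_exp_smul,
        intervalIntegral.integral_of_le (neg_le_self hR), ← integral_Icc_eq_integral_Ioc,
        ← integral_indicator measurableSet_Icc]
      simp only [smul_eq_mul, indicator_apply, Pi.one_apply, mul_ite, mul_one, mul_zero]
    _ = ∫ w in -R..R, Complex.exp (↑(-2 * π * t * w) * Complex.I) := by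
      simp only [mul_right_comm]
    _ = (-2 * π * t)⁻¹ • (2 * Real.sin (-2 * π * t * R) : ℂ) := by
      rw [intervalIntegral.integral_comp_mul_left (fun u : ℝ => Complex.exp (u * Complex.I)) hc,
        mul_neg, integral_exp_mul_I_eq_sin]
    _ = ((Real.sin (2 * π * R * t) / (π * t) : ℝ) : ℂ) := by
      rw [Complex.real_smul, show -2 * π * t * R = -(2 * π * R * t) by ring, Real.sin_neg]
      push_cast
      field_simp

theorem sinc_kernel_tendsto_delta_general {E : Type*} [NormedAddCommGroup E] [NormedSpace ℂ E]
    [CompleteSpace E] {f : ℝ → E} (hf : Integrable f) (h𝓕f : Integrable (𝓕 f))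
    (h0 : ContinuousAt f 0) :
    Tendsto (fun L : ℝ => ∫ t : ℝ, ((Real.sin (L * t) / (π * t) : ℝ) : ℂ) • f t)
      atTop (𝓝 (f 0)) := by
  have hR : Tendsto (fun L : ℝ => L / (2 * π)) atTop atTop :=
    tendsto_id.atTop_div_const Real.two_pi_pos
  have hcover : AECover volume atTop fun L : ℝ => Icc (-(L / (2 * π))) (L / (2 * π)) :=
    aecover_Icc (tendsto_neg_atTop_atBot.comp hR) hR
  refine (tendsto_integral_fourier_indicator_smul hcover (fun _ => measure_Icc_lt_top.ne)
    hf h𝓕f h0).congr' ?_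
  filter_upwards [eventually_ge_atTop 0] with L hL
  refine integral_congr_ae ?_
  filter_upwards [Measure.ae_ne volume (0 : ℝ)] with t ht
  rw [fourier_indicator_Icc_neg_self (by positivity) ht, mul_div_cancel₀ L Real.two_pi_pos.ne']

/-- The sinc kernel `t ↦ sin(Lt)/(πt)` is an approximate Dirac delta as `L → ∞`:
for every Schwartz function `f`, `lim_{L → ∞} ∫ f(t) sin(Lt)/(πt) dt = f(0)`. -/
theorem sinc_kernel_tendsto_delta (f : SchwartzMap ℝ ℂ) :
    Tendsto (fun L : ℝ => ∫ t : ℝ, f t * ((Real.sin (L * t) / (Real.pi * t) : ℝ) : ℂ))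
      atTop (nhds (f 0)) := by
  simpa only [smul_eq_mul, mul_comm] using sinc_kernel_tendsto_delta_general f.integrable
    (f.fourier_coe ▸ (𝓕 f).integrable) f.continuous.continuousAt
end

section
/- Let h : ℝ → ℂ be continuous and integrable with integrable Fourier transform ĥ(s) = ∫_ℝ h(ω) e^{−iωs} dω. Then for every ω_c > 0, every natural number n and every t ∈ ℝ, ∫₀^{ω_c} P_n(2ω/ω_c − 1) h(ω) e^{−iωt} dω = (1/(2π)) ∫_ℝ ĥ(s) γ_n^M(t − s) ds, where γ_n^M(u) = ∫₀^{ω_c} P_n(2ω/ω_c − 1) e^{−iωu} dω. In other words, the non-Markovian chain coupling coefficient is the convolution of the Fourier transform of the frequency-dependent coupling with the flat-spectral-density coupling coefficient. -/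
open MeasureTheory

/-! Let `γ` be the transform of the weight `L`. Substituting `s ↦ t - s` and moving the Fourier
transform from `L` onto `ĥ` by Fubini, the convolution `∫ ĥ(s) γ(t - s) ds` becomes the integral of
`L(ω)` against the transform of `s ↦ ĥ(t - s)`. The latter is `e^{-iωt}` times the transform of `ĥ`
at `-ω`, which is `2π h(ω)` by Fourier inversion. -/

theorem continuous_legendre (n : ℕ) : Continuous (legendre n) := by
  have hpow : ContDiff ℝ n (fun y : ℝ => (y ^ 2 - 1) ^ n) := by fun_prop
  exact continuous_const.mul (hpow.continuous_iteratedDeriv n le_rfl)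

section AngularFourier

open scoped FourierTransform RealInnerProductSpace

variable {V E : Type*} [NormedAddCommGroup V] [InnerProductSpace ℝ V] [MeasurableSpace V]
  [NormedAddCommGroup E] [NormedSpace ℂ E]

/-- The Fourier transform `ξ ↦ ∫ e^{-i⟨v, ξ⟩} f(v) dμ(v)` of `f` with respect to `μ` in the
angular-frequency convention: unlike in `𝓕`, there is no `2π` in the exponent, so the inversion
formula carries a factor `(2π)^{-dim V}`. A general `μ` covers transforms over an interval. -/
noncomputable def angularFourier (μ : Measure V) (f : V → E) : V → E :=
  VectorFourier.fourierIntegral Real.probChar μ (innerₗ V) f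

theorem angularFourier_apply (μ : Measure V) (f : V → E) (ξ : V) :
    angularFourier μ f ξ = ∫ v, Complex.exp (-⟪v, ξ⟫ * Complex.I) • f v ∂μ := by
  simp [angularFourier, VectorFourier.fourierIntegral_probChar]

theorem angularFourier_real_apply (μ : Measure ℝ) (f : ℝ → ℂ) (s : ℝ) :
    angularFourier μ f s = ∫ ω, f ω * Complex.exp (-Complex.I * ω * s) ∂μ := by
  rw [angularFourier_apply]
  congr 1 with ω
  rw [smul_eq_mul, mul_comm, RCLike.inner_apply', conj_trivial]
  congr 2
  push_cast
  ring

variable [BorelSpace V]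

theorem integral_angularFourier_smul_eq [SecondCountableTopology V] [CompleteSpace E]
    {μ ν : Measure V} [SigmaFinite μ] [SigmaFinite ν] {f : V → ℂ} {g : V → E}
    (hf : Integrable f μ) (hg : Integrable g ν) :
    ∫ ξ, angularFourier μ f ξ • g ξ ∂ν = ∫ v, f v • angularFourier ν g v ∂μ := by
  have hflip := VectorFourier.integral_fourierIntegral_smul_eq_flip (L := innerₗ V)
    Real.continuous_probChar continuous_inner hf hg
  rwa [flip_innerₗ] at hflip

theorem angularFourier_comp_sub_left (μ : Measure V) [μ.IsAddLeftInvariant] [μ.IsNegInvariant]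
    (g : V → E) (t v : V) :
    angularFourier μ (fun ξ => g (t - ξ)) v =
      Complex.exp (-⟪t, v⟫ * Complex.I) • angularFourier μ g (-v) := by
  simp only [angularFourier_apply]
  rw [← integral_sub_left_eq_self _ μ t, ← integral_smul]
  congr 1 with ξ
  rw [sub_sub_cancel, smul_smul, ← Complex.exp_add]
  congr 2
  rw [inner_sub_left, inner_neg_right]
  push_cast
  ring

variable [FiniteDimensional ℝ V]

theorem angularFourier_comp_smul (μ : Measure V) [μ.IsAddHaarMeasure] (f : V → E) {c : ℝ}
    (hc : c ≠ 0) (ξ : V) :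
    angularFourier μ (fun v => f (c • v)) ξ =
      |(c ^ Module.finrank ℝ V)⁻¹| • angularFourier μ f (c⁻¹ • ξ) := by
  simp only [angularFourier_apply]
  rw [← Measure.integral_comp_smul]
  simp only [real_inner_smul_left, real_inner_smul_right, inv_mul_cancel_left₀ hc]

theorem fourier_eq_angularFourier (f : V → E) (ξ : V) :
    𝓕 f ξ = angularFourier volume f ((2 * Real.pi) • ξ) := by
  rw [Real.fourier_eq', angularFourier_apply]
  congr 1 with v
  congr 2
  rw [real_inner_smul_right]
  push_cast
  ring

theorem angularFourier_angularFourier_neg [CompleteSpace E] {f : V → E} (hf : Integrable f)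
    (hfhat : Integrable (angularFourier volume f)) {v : V} (hv : ContinuousAt f v) :
    angularFourier volume (angularFourier volume f) (-v) =
      ((2 * Real.pi) ^ Module.finrank ℝ V) • f v := by
  have hscale : 𝓕 f = fun ξ => angularFourier volume f ((2 * Real.pi) • ξ) :=
    funext (fourier_eq_angularFourier f)
  have hinv : 𝓕⁻ (𝓕 f) v = f v :=
    hf.fourierInv_fourier_eq (hscale ▸ hfhat.comp_smul Real.two_pi_pos.ne') hv
  rw [← hinv, Real.fourierInv_eq_fourier_neg, fourier_eq_angularFourier (𝓕 f), hscale,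
    angularFourier_comp_smul _ _ Real.two_pi_pos.ne', inv_smul_smul₀ Real.two_pi_pos.ne',
    abs_of_pos (by positivity), smul_inv_smul₀ (by positivity)]

theorem nonMarkovian_coupling_convolution_general [CompleteSpace E] {μ : Measure V}
    [SigmaFinite μ] {L : V → ℂ} {h : V → E} (hL : Integrable L μ) (hint : Integrable h)
    (hcont : ∀ᵐ ω ∂μ, ContinuousAt h ω) (hhat_int : Integrable (angularFourier volume h)) (t : V) :
    angularFourier μ (fun ω => L ω • h ω) t =
      ((2 * Real.pi) ^ Module.finrank ℝ V)⁻¹ •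
        ∫ s, angularFourier μ L (t - s) • angularFourier volume h s := by
  rw [eq_inv_smul_iff₀ (by positivity)]
  symm
  calc
    ∫ s, angularFourier μ L (t - s) • angularFourier volume h s
      = ∫ s, angularFourier μ L s • angularFourier volume h (t - s) := by
        rw [← integral_sub_left_eq_self _ volume t]
        simp only [sub_sub_cancel]
    _ = ∫ ω, L ω • angularFourier volume (fun s => angularFourier volume h (t - s)) ω ∂μ :=
        integral_angularFourier_smul_eq hL (hhat_int.comp_sub_left t)
    _ = ∫ ω, ((2 * Real.pi) ^ Module.finrank ℝ V) •
          Complex.exp (-⟪ω, t⟫ * Complex.I) • L ω • h ω ∂μ := by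
        refine integral_congr_ae (hcont.mono fun ω hω => ?_)
        dsimp only
        rw [angularFourier_comp_sub_left, angularFourier_angularFourier_neg hint hhat_int hω,
          real_inner_comm]
        module
    _ = ((2 * Real.pi) ^ Module.finrank ℝ V) • angularFourier μ (fun ω => L ω • h ω) t := by
        rw [integral_smul, angularFourier_apply]

end AngularFourier

/-- The non-Markovian chain coupling coefficient is the convolution of the Fourier
transform `ĥ(s) = ∫ h(ω) e^{−iωs} dω` of the frequency-dependent coupling with the
flat-spectral-density coupling `γ_n^M(u) = ∫₀^{ω_c} P_n(2ω/ω_c − 1) e^{−iωu} dω`: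
`∫₀^{ω_c} P_n(2ω/ω_c − 1) h(ω) e^{−iωt} dω = (1/(2π)) ∫ ĥ(s) γ_n^M(t − s) ds`. -/
theorem nonMarkovian_coupling_convolution (h : ℝ → ℂ)
    (hcont : Continuous h) (hint : Integrable h)
    (hhat_int : Integrable (fun s : ℝ => ∫ ω : ℝ, h ω * Complex.exp (-Complex.I * ω * s)))
    (ωc : ℝ) (hωc : 0 < ωc) (n : ℕ) (t : ℝ) :
    (∫ ω in (0 : ℝ)..ωc,
        (legendre n (2 * ω / ωc - 1) : ℂ) * h ω * Complex.exp (-Complex.I * ω * t))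
      = (1 / (2 * (Real.pi : ℂ)))
          * ∫ s : ℝ, (∫ ω : ℝ, h ω * Complex.exp (-Complex.I * ω * s))
              * ∫ ω in (0 : ℝ)..ωc,
                  (legendre n (2 * ω / ωc - 1) : ℂ) * Complex.exp (-Complex.I * ω * (t - s)) := by
  have hL : Continuous fun ω : ℝ => (legendre n (2 * ω / ωc - 1) : ℂ) :=
    Complex.continuous_ofReal.comp ((continuous_legendre n).comp (by fun_prop))
  simp only [← angularFourier_real_apply] at hhat_int
  have hconv := nonMarkovian_coupling_convolution_general
    (hL.integrableOn_Ioc (μ := volume) (a := 0) (b := ωc)) hint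
    (ae_of_all _ fun _ => hcont.continuousAt) hhat_int t
  simpa [intervalIntegral.integral_of_le hωc.le, angularFourier_real_apply, mul_comm] using hconv
end

section
/- Let α ≥ 0, ω_c > 0 and Δt ≥ π/ω_c, and define ΔC(τ) = ∫_{π/Δt}^{ω_c} 2αω e^{−iωτ} dω. Then 4 ∫₀^{Δt} ( ∫₀^{t'} |ΔC(t' − t'')| dt'' ) dt' ≤ 2π²α ( (ω_c Δt / π)² − 1 ). Consequently, the bath-correlation-function sampling error in a non-Markovian collision model with time step Δt > π/ω_c is of order O(Δt²). -/
open MeasureTheory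

/-! Every phase `e^{−iωτ}` is unimodular, so `|ΔC(τ)|` is bounded, uniformly in `τ`, by the total
spectral weight `∫ J` of the band `[π/Δt, ω_c]`, which is `α(ω_c² − (π/Δt)²)`. The pairs
`0 ≤ t'' ≤ t' ≤ Δt` form a triangle of area `Δt²/2`. -/

/-- The contribution of the frequency band `[a, b]` to the zero-temperature correlation function,
at time lag `τ`, of a bath with spectral density `J`. The paper's `ΔC(τ)` is the case
`a = π/Δt`, `b = ω_c`. -/
noncomputable def bandCorrelation (J : ℝ → ℝ) (a b τ : ℝ) : ℂ :=
  ∫ ω in a..b, (J ω : ℂ) * Complex.exp (-Complex.I * ω * τ)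

/-- The Ohmic spectral density with coupling strength `α`, without its cutoff: the cutoff is the
upper endpoint of the band in `bandCorrelation`. -/
def ohmicDensity (α ω : ℝ) : ℝ := 2 * α * ω

lemma norm_integral_integral_le_of_norm_le_const {E : Type*} [NormedAddCommGroup E]
    [NormedSpace ℝ E] {F : ℝ → ℝ → E} {a b C : ℝ} (hab : a ≤ b)
    (hF : ∀ t ∈ Set.Ioc a b, ∀ s ∈ Set.Ioc a t, ‖F t s‖ ≤ C) :
    ‖∫ t in a..b, ∫ s in a..t, F t s‖ ≤ C * ((b - a) ^ 2 / 2) := by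
  have inner_le : ∀ t ∈ Set.Ioc a b, ‖∫ s in a..t, F t s‖ ≤ C * (t - a) := fun t ht => by
    have h := intervalIntegral.norm_integral_le_of_norm_le_const (f := F t) (a := a) (b := t)
      (C := C) (by simpa only [Set.uIoc_of_le ht.1.le] using hF t ht)
    rwa [abs_of_pos (sub_pos.mpr ht.1)] at h
  calc ‖∫ t in a..b, ∫ s in a..t, F t s‖
      ≤ ∫ t in a..b, C * (t - a) :=
        intervalIntegral.norm_integral_le_of_norm_le hab (.of_forall inner_le)
          (Continuous.intervalIntegrable (by fun_prop) a b)
    _ = C * ((b - a) ^ 2 / 2) := by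
        rw [intervalIntegral.integral_const_mul,
          intervalIntegral.integral_comp_sub_right (fun t => t) a, integral_id]
        ring

lemma norm_bandCorrelation_le (J : ℝ → ℝ) {a b : ℝ} (hab : a ≤ b) (τ : ℝ) :
    ‖bandCorrelation J a b τ‖ ≤ ∫ ω in a..b, |J ω| := by
  have norm_integrand (ω : ℝ) : ‖(J ω : ℂ) * Complex.exp (-Complex.I * ω * τ)‖ = |J ω| := by
    simp [Complex.norm_exp]
  simpa only [bandCorrelation, norm_integrand] using intervalIntegral.norm_integral_le_integral_norm
    (f := fun ω : ℝ => (J ω : ℂ) * Complex.exp (-Complex.I * ω * τ)) hab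

lemma integral_integral_norm_bandCorrelation_le (J : ℝ → ℝ) {a b t₀ t₁ : ℝ} (hab : a ≤ b)
    (ht : t₀ ≤ t₁) :
    ∫ t in t₀..t₁, ∫ s in t₀..t, ‖bandCorrelation J a b (t - s)‖
      ≤ (∫ ω in a..b, |J ω|) * ((t₁ - t₀) ^ 2 / 2) :=
  (Real.le_norm_self _).trans <| norm_integral_integral_le_of_norm_le_const ht fun t _ s _ =>
    (norm_norm _).trans_le (norm_bandCorrelation_le J hab (t - s))

lemma integral_abs_ohmicDensity (α : ℝ) {a b : ℝ} (ha : 0 ≤ a) (hab : a ≤ b) :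
    ∫ ω in a..b, |ohmicDensity α ω| = |α| * (b ^ 2 - a ^ 2) := by
  calc ∫ ω in a..b, |ohmicDensity α ω|
      = ∫ ω in a..b, 2 * |α| * ω := by
        refine intervalIntegral.integral_congr fun ω hω => ?_
        rw [Set.uIcc_of_le hab] at hω
        simp only [ohmicDensity, abs_mul, Nat.abs_ofNat, abs_of_nonneg (ha.trans hω.1)]
    _ = |α| * (b ^ 2 - a ^ 2) := by
        rw [intervalIntegral.integral_const_mul, integral_id]
        ring

/-- For the Spin Boson Model with Ohmic spectral density `J(ω) = 2αω` on `[0, ω_c]`,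
the bath-correlation-function sampling error for a collision-model time step
`Δt ≥ π/ω_c` satisfies
`4 ∫₀^{Δt} ∫₀^{t'} |ΔC(t' − t'')| dt'' dt' ≤ 2π²α((ω_c Δt/π)² − 1)`,
where `ΔC(τ) = ∫_{π/Δt}^{ω_c} 2αω e^{−iωτ} dω`; hence the sampling error is `O(Δt²)`. -/
theorem sampling_error_bound (α ωc Δt : ℝ) (hα : 0 ≤ α) (hωc : 0 < ωc)
    (hΔt : Real.pi / ωc ≤ Δt) :
    4 * (∫ t' in (0 : ℝ)..Δt, ∫ t'' in (0 : ℝ)..t',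
          ‖∫ ω in (Real.pi / Δt : ℝ)..ωc,
              (2 * (α : ℂ) * (ω : ℂ)) * Complex.exp (-Complex.I * ω * (t' - t''))‖)
      ≤ 2 * Real.pi ^ 2 * α * ((ωc * Δt / Real.pi) ^ 2 - 1) := by
  have hΔt_pos : 0 < Δt := (div_pos Real.pi_pos hωc).trans_le hΔt
  have hband : Real.pi / Δt ≤ ωc := (div_le_comm₀ hωc hΔt_pos).mp hΔt
  calc
    _ = 4 * ∫ t' in (0 : ℝ)..Δt, ∫ t'' in (0 : ℝ)..t',
          ‖bandCorrelation (ohmicDensity α) (Real.pi / Δt) ωc (t' - t'')‖ := by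
        simp only [bandCorrelation, ohmicDensity, Complex.ofReal_mul, Complex.ofReal_ofNat,
          Complex.ofReal_sub]
    _ ≤ 4 * ((∫ ω in (Real.pi / Δt)..ωc, |ohmicDensity α ω|) * ((Δt - 0) ^ 2 / 2)) := by
        gcongr
        exact integral_integral_norm_bandCorrelation_le _ hband hΔt_pos.le
    _ = 4 * (α * (ωc ^ 2 - (Real.pi / Δt) ^ 2) * (Δt ^ 2 / 2)) := by
        rw [integral_abs_ohmicDensity α (by positivity) hband, abs_of_nonneg hα, sub_zero]
    _ = 2 * Real.pi ^ 2 * α * ((ωc * Δt / Real.pi) ^ 2 - 1) := by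
        field_simp
        ring
end
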